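/- arXiv:2402.08555 — 2 statements merged into one kernel-verified Lean document; each statement's English description precedes it below -/
import Mathlib

section
/- Let a = (a_1,…,a_n) and b = (b_1,…,b_m) be finite sequences of natural numbers. Then Υ(a)·Υ(b) = ∑_{c} Υ(c), where the sum ranges over all shuffles c of a and b, i.e. over all n-element subsets S of the positions {1,…,n+m}, with c the sequence of length n+m placing the entries of a (in order) at the positions of S and the entries of b (in order) at the remaining positions. -/
open scoped BigOperators

/-- The `Υ` function on a finite sequence of naturals: `0` unless the sequence is
nonincreasing, and `1 / ∏_v m_v!` otherwise, where `m_v` is the number of entries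
equal to `v`. -/
noncomputable def Upsilon {n : ℕ} (z : Fin n → ℕ) : ℚ :=
  if ∀ i j : Fin n, i ≤ j → z j ≤ z i then
    ((∏ v ∈ Finset.univ.image z,
        (Finset.univ.filter fun i => z i = v).card.factorial : ℕ) : ℚ)⁻¹
  else 0

/-- The shuffle of the sequences `a` and `b` determined by a set `S` of positions of
cardinality `n`: the entries of `a` are placed, in order, at the positions of `S`, and
the entries of `b`, in order, at the remaining positions. (Junk value `0` if
`S.card ≠ n`.) -/
noncomputable def shuffleSeq {n m : ℕ} (a : Fin n → ℕ) (b : Fin m → ℕ)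
    (S : Finset (Fin (n + m))) : Fin (n + m) → ℕ := fun i =>
  if h : i ∈ S then
    if hc : S.card = n then a ((S.orderIsoOfFin hc).symm ⟨i, h⟩) else 0
  else
    if hc : Sᶜ.card = m then b ((Sᶜ.orderIsoOfFin hc).symm ⟨i, Finset.mem_compl.mpr h⟩)
    else 0


/-- number of indices satisfying a predicate -/
def cntP {n : ℕ} (P : ℕ → Bool) (z : Fin n → ℕ) : ℕ := (Finset.univ.filter fun i => P (z i) = true).card

lemma cntP_cons {n : ℕ} (P : ℕ → Bool) (x : ℕ) (z : Fin n → ℕ) :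
    cntP P (Fin.cons x z : Fin (n+1) → ℕ) = (if P x = true then 1 else 0) + cntP P z := by
  unfold cntP
  rw [Fin.card_filter_univ_succ]
  simp only [Fin.cons_zero, Fin.cons_succ]
  split_ifs <;> omega

/-- factor -/
def gfac (_x k l : ℕ) : ℚ := if l = 0 then ((k : ℚ) + 1)⁻¹ else 0

lemma upsilon_prod_superset {n : ℕ} (z : Fin n → ℕ) (V : Finset ℕ) (hV : Finset.univ.image z ⊆ V) :
    (∏ v ∈ Finset.univ.image z, (Finset.univ.filter fun i => z i = v).card.factorial) =
    ∏ v ∈ V, (Finset.univ.filter fun i => z i = v).card.factorial := by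
  apply Finset.prod_subset hV
  intro v _ hv
  have : (Finset.univ.filter fun i => z i = v) = ∅ := by
    ext i
    simp only [Finset.mem_image, Finset.mem_univ, true_and, not_exists] at hv
    simp [hv i]
  simp [this]

lemma upsilon_cons {n : ℕ} (x : ℕ) (z : Fin n → ℕ) :
    Upsilon (Fin.cons x z : Fin (n+1) → ℕ) =
      gfac x (cntP (fun y => decide (y = x)) z) (cntP (fun y => decide (x < y)) z) * Upsilon z := by
  have h1 : (∀ i j : Fin (n+1), i ≤ j → (Fin.cons x z : Fin (n+1) → ℕ) j ≤ (Fin.cons x z : Fin (n+1) → ℕ) i)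
      ↔ (cntP (fun y => decide (x < y)) z = 0 ∧ ∀ i j : Fin n, i ≤ j → z j ≤ z i) := by
    simp [Fin.forall_fin_succ, cntP, Finset.filter_eq_empty_iff, forall_and]
  unfold Upsilon gfac
  by_cases hz : cntP (fun y => decide (x < y)) z = 0
  · by_cases ha : ∀ i j : Fin n, i ≤ j → z j ≤ z i
    · rw [if_pos (h1.2 ⟨hz, ha⟩), if_pos hz, if_pos ha]
      rw [upsilon_prod_superset _ (insert x (Finset.univ.image z)),
        upsilon_prod_superset z (insert x (Finset.univ.image z)) (Finset.subset_insert _ _)]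
      · rw [← Finset.mul_prod_erase _ _ (Finset.mem_insert_self x _),
          ← Finset.mul_prod_erase _ (fun v => (Finset.univ.filter fun i => z i = v).card.factorial) (Finset.mem_insert_self x _)]
        have h2 : ∀ v ∈ (insert x (Finset.univ.image z)).erase x,
          (Finset.univ.filter fun i => (Fin.cons x z : Fin (n+1) → ℕ) i = v).card.factorial
            = (Finset.univ.filter fun i => z i = v).card.factorial := by
          intro v hv
          rw [Fin.card_filter_univ_succ]
          simp [(Finset.ne_of_mem_erase hv).symm]
        rw [Finset.prod_congr rfl h2, Fin.card_filter_univ_succ]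
        simp only [Fin.cons_zero, Fin.cons_succ, if_true, Nat.factorial_succ, cntP, decide_eq_true_eq]
        push_cast
        simp only [mul_inv]
        ring
      · intro v
        simp only [Finset.mem_image, Finset.mem_univ, true_and, Finset.mem_insert]
        rintro ⟨i, rfl⟩
        refine Fin.cases ?_ (fun i => ?_) i
        · simp
        · right; exact ⟨i, by simp⟩
    · rw [if_neg (fun h => ha (h1.1 h).2), if_neg ha, mul_zero]
  · rw [if_neg (fun h => hz (h1.1 h).1), if_neg hz, zero_mul]

/-- rank -/
def rk {N : ℕ} (w : Fin N → Bool) (c : Bool) (i : Fin N) : ℕ :=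
  (Finset.univ.filter fun j => j < i ∧ w j = c).card

/-- shuffle -/
def shT {N : ℕ} (w : Fin N → Bool) (A B : ℕ → ℕ) (i : Fin N) : ℕ :=
  if w i = true then A (rk w true i) else B (rk w false i)

/-- truncation -/
def cut (n : ℕ) (A : ℕ → ℕ) : Fin n → ℕ := fun i => A i

lemma cut_succ (n : ℕ) (A : ℕ → ℕ) :
    cut (n+1) A = (Fin.cons (A 0) (cut n (fun k => A (k+1))) : Fin (n+1) → ℕ) := by
  ext i
  refine Fin.cases ?_ (fun i => ?_) i <;> simp [cut]

lemma rk_zero {N : ℕ} (w : Fin (N+1) → Bool) (c : Bool) : rk w c 0 = 0 := by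
  simp [rk]

lemma rk_succ {N : ℕ} (x : Bool) (w : Fin N → Bool) (c : Bool) (i : Fin N) :
    rk (Fin.cons x w : Fin (N+1) → Bool) c i.succ = (if x = c then 1 else 0) + rk w c i := by
  unfold rk
  rw [Fin.card_filter_univ_succ]
  simp only [Fin.cons_zero, Fin.cons_succ, Fin.succ_pos, true_and, Fin.succ_lt_succ_iff]
  split_ifs <;> omega

lemma shT_true {N : ℕ} (w : Fin N → Bool) (A B : ℕ → ℕ) :
    shT (Fin.cons true w : Fin (N+1) → Bool) A B
      = (Fin.cons (A 0) (shT w (fun k => A (k+1)) B) : Fin (N+1) → ℕ) := by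
  ext i
  refine Fin.cases ?_ (fun i => ?_) i
  · simp [shT, rk_zero]
  · simp [shT, rk_succ, add_comm]

lemma shT_false {N : ℕ} (w : Fin N → Bool) (A B : ℕ → ℕ) :
    shT (Fin.cons false w : Fin (N+1) → Bool) A B
      = (Fin.cons (B 0) (shT w A (fun k => B (k+1))) : Fin (N+1) → ℕ) := by
  ext i
  refine Fin.cases ?_ (fun i => ?_) i
  · simp [shT, rk_zero]
  · simp [shT, rk_succ, add_comm]

/-- number of trues -/
def wt {N : ℕ} (w : Fin N → Bool) : ℕ := (Finset.univ.filter fun i => w i = true).card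

lemma wt_cons {N : ℕ} (x : Bool) (w : Fin N → Bool) :
    wt (Fin.cons x w : Fin (N+1) → Bool) = (if x = true then 1 else 0) + wt w := by
  unfold wt
  rw [Fin.card_filter_univ_succ]
  simp only [Fin.cons_zero, Fin.cons_succ]
  split_ifs <;> omega

lemma wt_le {N : ℕ} (w : Fin N → Bool) : wt w ≤ N := by
  simpa [wt] using Finset.card_filter_le (Finset.univ : Finset (Fin N)) (fun i => w i = true)

lemma cntP_shT (P : ℕ → Bool) (N : ℕ) : ∀ (n m : ℕ) (_ : N = n + m) (A B : ℕ → ℕ)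
    (w : Fin N → Bool) (_ : wt w = n),
    cntP P (shT w A B) = cntP P (cut n A) + cntP P (cut m B) := by
  induction N with
  | zero =>
    intro n m h A B w hw
    obtain ⟨rfl, rfl⟩ : n = 0 ∧ m = 0 := by omega
    simp [cntP]
  | succ N ih =>
    intro n m h A B w
    rw [← Fin.cons_self_tail w]
    generalize w 0 = x
    generalize Fin.tail w = w
    intro hw
    rw [wt_cons] at hw
    have hle := wt_le w
    cases x
    · simp at hw
      obtain ⟨m, rfl⟩ : ∃ k, m = k + 1 := ⟨m - 1, by omega⟩
      rw [shT_false, cut_succ m, cntP_cons, cntP_cons, ih n m (by omega) _ _ _ hw]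
      ring
    · simp at hw
      obtain ⟨n, rfl⟩ : ∃ k, n = k + 1 := ⟨n - 1, by omega⟩
      rw [shT_true, cut_succ n, cntP_cons, cntP_cons, ih n m (by omega) _ _ _ (by omega)]
      ring

lemma sum_cons {N : ℕ} (f : (Fin (N+1) → Bool) → ℚ) :
    ∑ w, f w = ∑ w : Fin N → Bool, f (Fin.cons true w) + ∑ w : Fin N → Bool, f (Fin.cons false w) := by
  rw [← (Fin.consEquiv (fun _ : Fin (N+1) => Bool)).sum_comp, Fintype.sum_prod_type, Fintype.sum_bool]
  rfl

lemma upsilon_empty (z : Fin 0 → ℕ) : Upsilon z = 1 := by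
  simp [Upsilon]

lemma cnt_zero_trans {n : ℕ} (z : Fin n → ℕ) (x y : ℕ) (h : x < y)
    (hx : cntP (fun t => decide (x < t)) z = 0) :
    cntP (fun t => decide (y < t)) z = 0 ∧ cntP (fun t => decide (t = y)) z = 0 := by
  simp only [cntP, Finset.card_eq_zero, Finset.filter_eq_empty_iff, decide_eq_true_eq, Finset.mem_univ,
    forall_true_left] at *
  exact ⟨fun i => by have := @hx i; omega, fun i => by have := @hx i; omega⟩

/-- true part -/
lemma part_sum (N n m : ℕ) (h : N = n + m) (A B : ℕ → ℕ) (x : ℕ)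
    (ih : Upsilon (cut n A) * Upsilon (cut m B) =
      ∑ w : Fin N → Bool, if wt w = n then Upsilon (shT w A B) else 0) :
    (∑ w : Fin N → Bool, if wt w = n then
      Upsilon (Fin.cons x (shT w A B) : Fin (N+1) → ℕ) else 0) =
    gfac x (cntP (fun y => decide (y = x)) (cut n A) + cntP (fun y => decide (y = x)) (cut m B))
      (cntP (fun y => decide (x < y)) (cut n A) + cntP (fun y => decide (x < y)) (cut m B)) *
      (Upsilon (cut n A) * Upsilon (cut m B)) := by
  rw [ih, Finset.mul_sum]
  refine Finset.sum_congr rfl fun w _ => ?_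
  split_ifs with hw
  · rw [upsilon_cons, cntP_shT _ N n m h A B w hw, cntP_shT _ N n m h A B w hw]
  · simp

lemma alg {n m : ℕ} (x y : ℕ) (a : Fin n → ℕ) (b : Fin m → ℕ) :
  Upsilon (Fin.cons x a : Fin (n+1) → ℕ) * Upsilon (Fin.cons y b : Fin (m+1) → ℕ) =
    gfac x (cntP (fun t => decide (t = x)) a
        + cntP (fun t => decide (t = x)) (Fin.cons y b : Fin (m+1) → ℕ))
      (cntP (fun t => decide (x < t)) a
        + cntP (fun t => decide (x < t)) (Fin.cons y b : Fin (m+1) → ℕ)) *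
      (Upsilon a * Upsilon (Fin.cons y b : Fin (m+1) → ℕ)) +
    gfac y (cntP (fun t => decide (t = y)) (Fin.cons x a : Fin (n+1) → ℕ)
        + cntP (fun t => decide (t = y)) b)
      (cntP (fun t => decide (y < t)) (Fin.cons x a : Fin (n+1) → ℕ)
        + cntP (fun t => decide (y < t)) b) *
      (Upsilon (Fin.cons x a : Fin (n+1) → ℕ) * Upsilon b) := by
  simp only [upsilon_cons, cntP_cons, decide_eq_true_eq]
  have ha := cnt_zero_trans a x y
  have hb := cnt_zero_trans b y x
  rcases lt_trichotomy x y with h | rfl | h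
  · simp only [h, h.ne, h.ne', not_lt.2 h.le, if_true, if_false, gfac]
    specialize ha h
    by_cases h1 : cntP (fun t => decide (x < t)) a = 0
    · obtain ⟨h2, h3⟩ := ha h1
      simp [h1, h2, h3]
      split_ifs <;> ring
    · simp [h1]
  · simp only [lt_irrefl, if_true, if_false, gfac]
    by_cases h1 : cntP (fun t => decide (x < t)) a = 0
    · by_cases h2 : cntP (fun t => decide (x < t)) b = 0
      · simp [h1, h2]
        field_simp
        ring
      · simp [h1, h2]
    · simp [h1]
  · simp only [h, h.ne, h.ne', not_lt.2 h.le, if_true, if_false, gfac]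
    specialize hb h
    by_cases h1 : cntP (fun t => decide (y < t)) b = 0
    · obtain ⟨h2, h3⟩ := hb h1
      simp [h1, h2, h3]
      split_ifs <;> ring
    · simp [h1]

lemma main_sum (N : ℕ) : ∀ (n m : ℕ) (_ : N = n + m) (A B : ℕ → ℕ),
    Upsilon (cut n A) * Upsilon (cut m B) =
      ∑ w : Fin N → Bool, if wt w = n then Upsilon (shT w A B) else 0 := by
  induction N with
  | zero =>
    intro n m h A B
    obtain ⟨rfl, rfl⟩ : n = 0 ∧ m = 0 := by omega
    simp [upsilon_empty, wt]
  | succ N ih =>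
    intro n m h A B
    rw [sum_cons]
    simp only [wt_cons, shT_true, shT_false, if_true, Bool.false_eq_true, if_false, zero_add]
    have hF : ∀ m', m = m' + 1 → _ := fun m' hm' =>
      part_sum N n m' (by omega) A (fun k => B (k+1)) (B 0) (ih _ _ (by omega) _ _)
    have hT : ∀ n', n = n' + 1 → _ := fun n' hn' =>
      part_sum N n' m (by omega) (fun k => A (k+1)) B (A 0) (ih _ _ (by omega) _ _)
    rcases n with _ | n
    · obtain ⟨m, rfl⟩ : ∃ k, m = k + 1 := ⟨m - 1, by omega⟩
      rw [hF m rfl, cut_succ m, upsilon_cons]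
      simp [upsilon_empty, cntP]
    · simp only [add_comm 1, add_left_inj]
      rw [hT n rfl]
      rcases m with _ | m
      · rw [Finset.sum_eq_zero (s := Finset.univ), cut_succ n, upsilon_cons]
        · simp [upsilon_empty, cntP]
        · intro w _
          rw [if_neg]
          have := wt_le w
          omega
      · rw [hF m rfl, cut_succ m, cut_succ n, alg]

lemma orderIso_symm_val {N k : ℕ} (S : Finset (Fin N)) (hc : S.card = k) (i : Fin N) (h : i ∈ S) :
    (((S.orderIsoOfFin hc).symm ⟨i, h⟩ : Fin k) : ℕ)
      = (Finset.univ.filter fun j => j < i ∧ j ∈ S).card := by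
  set e := S.orderIsoOfFin hc
  set q := e.symm ⟨i, h⟩ with hq
  rw [← Fin.card_Iio q]
  refine Finset.card_bij (fun p _ => (e p : Fin N)) ?_ ?_ ?_
  · intro p hp
    have h1 : e p < e q := e.lt_iff_lt.2 (Finset.mem_Iio.1 hp)
    rw [hq, e.apply_symm_apply] at h1
    simp only [Finset.mem_filter, Finset.mem_univ, true_and]
    exact ⟨h1, (e p).2⟩
  · intro p _ p' _ hpp
    exact e.injective (Subtype.ext hpp)
  · intro j hj
    simp only [Finset.mem_filter, Finset.mem_univ, true_and] at hj
    refine ⟨e.symm ⟨j, hj.2⟩, ?_, by simp⟩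
    rw [Finset.mem_Iio, hq, e.symm.lt_iff_lt]
    exact hj.1

/-- extension by zero -/
def extz {n : ℕ} (a : Fin n → ℕ) (k : ℕ) : ℕ := if h : k < n then a ⟨k, h⟩ else 0

lemma extz_val {n : ℕ} (a : Fin n → ℕ) (i : Fin n) : extz a i = a i := by
  simp [extz]

lemma cut_extz {n : ℕ} (a : Fin n → ℕ) : cut n (extz a) = a := by
  ext i; simp [cut, extz_val]

lemma shuffle_eq {n m : ℕ} (a : Fin n → ℕ) (b : Fin m → ℕ) (S : Finset (Fin (n + m)))
    (hS : S.card = n) :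
    shuffleSeq a b S = shT (fun i => decide (i ∈ S)) (extz a) (extz b) := by
  have hS' : Sᶜ.card = m := by rw [Finset.card_compl, hS]; simp
  ext i
  unfold shuffleSeq shT
  by_cases h : i ∈ S
  · simp only [h, hS, dif_pos, decide_true, if_true]
    rw [← extz_val a, orderIso_symm_val]
    simp [rk]
  · simp only [h, hS', dif_pos, dif_neg, not_false_eq_true, decide_false, Bool.false_eq_true, if_false]
    rw [← extz_val b, orderIso_symm_val]
    simp [rk]

/-- `Υ(a)·Υ(b)` equals the sum of `Υ(c)` over all shuffles `c` of `a` and `b`. -/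
theorem upsilon_mul_eq_sum_shuffles {n m : ℕ} (a : Fin n → ℕ) (b : Fin m → ℕ) :
    Upsilon a * Upsilon b =
      ∑ S ∈ Finset.univ.filter (fun S : Finset (Fin (n + m)) => S.card = n),
        Upsilon (shuffleSeq a b S) := by
  have h := main_sum (n + m) n m rfl (extz a) (extz b)
  rw [cut_extz, cut_extz] at h
  rw [h, ← Finset.sum_filter]
  symm
  refine Finset.sum_bij' (fun S _ => fun i => decide (i ∈ S))
    (fun w _ => Finset.univ.filter fun i => w i = true) ?_ ?_ ?_ ?_ ?_
  · intro S hS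
    have hS := (Finset.mem_filter.1 hS).2
    refine Finset.mem_filter.2 ⟨Finset.mem_univ _, ?_⟩
    simpa [wt] using hS
  · intro w hw
    exact Finset.mem_filter.2 ⟨Finset.mem_univ _, (Finset.mem_filter.1 hw).2⟩
  · intro S _
    ext; simp
  · intro w _
    ext; simp
  · intro S hS
    rw [shuffle_eq a b S (by simpa using hS)]
end

section
/- Let R be a (not necessarily commutative) ring containing ℚ (so that division by factorials makes sense), let m ≥ 1 and let h_1, …, h_m ∈ R. Then for every n ≥ 1: ∑_{k=1}^{n} ∑_{(n_1,…,n_k)} ∑_{m ≥ z_1 > z_2 > ⋯ > z_k ≥ 1} (1/(n_1!⋯n_k!)) · h_{z_1}^{n_1} h_{z_2}^{n_2} ⋯ h_{z_k}^{n_k} = ∑_{z ∈ {1,…,m}^n} Υ(z) · h_{z_1} h_{z_2} ⋯ h_{z_n}, where the middle sum is over all compositions (n_1,…,n_k) of n into k positive parts, i.e. n_1 + ⋯ + n_k = n with each n_i ≥ 1. -/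
open scoped BigOperators

def LL {k : ℕ} (nv z : Fin k → ℕ) : List ℕ :=
  (List.ofFn fun i : Fin k => List.replicate (nv i) (z i)).flatten

noncomputable def GG {R : Type*} [Ring R] [Algebra ℚ R] (h : ℕ → R) (l : List ℕ) : R :=
  ((∏ v ∈ l.toFinset, ((l.count v).factorial : ℚ))⁻¹) • (l.map h).prod

theorem LL_count {k : ℕ} (nv z : Fin k → ℕ) (v : ℕ) :
    (LL nv z).count v = ∑ i, if z i = v then nv i else 0 := by
  simp [LL, List.count_flatten, List.map_ofFn, List.sum_ofFn, List.count_replicate]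

theorem LL_count_self {k : ℕ} (nv z : Fin k → ℕ) (hz : Function.Injective z) (i : Fin k) :
    (LL nv z).count (z i) = nv i := by
  simp [LL_count, hz.eq_iff]

theorem LL_length {k : ℕ} (nv z : Fin k → ℕ) : (LL nv z).length = ∑ i, nv i := by
  simp [LL, List.length_flatten, List.map_ofFn, List.sum_ofFn]

theorem LL_toFinset {k : ℕ} (nv z : Fin k → ℕ) (hn : ∀ i, 1 ≤ nv i) :
    (LL nv z).toFinset = Finset.univ.image z := by
  ext v
  simp only [LL, List.mem_toFinset, List.mem_flatten, List.mem_ofFn, Finset.mem_image,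
    Finset.mem_univ, true_and]
  constructor
  · rintro ⟨l, ⟨i, rfl⟩, hv⟩
    exact ⟨i, (List.eq_of_mem_replicate hv).symm⟩
  · rintro ⟨i, rfl⟩
    exact ⟨_, ⟨i, rfl⟩, List.mem_replicate.2 ⟨by have := hn i; omega, rfl⟩⟩

theorem LL_sorted {k : ℕ} (nv z : Fin k → ℕ) (hz : ∀ i j : Fin k, i < j → z j < z i) :
    (LL nv z).Pairwise (· ≥ ·) := by
  rw [LL, List.pairwise_flatten]
  constructor
  · intro l hl
    obtain ⟨i, rfl⟩ := (List.mem_ofFn' _ _).1 hl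
    simp [List.pairwise_replicate]
  · rw [List.pairwise_ofFn]
    intro i j hij x hx y hy
    rw [List.eq_of_mem_replicate hx, List.eq_of_mem_replicate hy]
    exact (hz i j hij).le

theorem inj_of {k : ℕ} (z : Fin k → ℕ) (hz : ∀ i j : Fin k, i < j → z j < z i) :
    Function.Injective z := (show StrictAnti z from fun i j => hz i j).injective

theorem GG_LL {R : Type*} [Ring R] [Algebra ℚ R] (h : ℕ → R) {k : ℕ} (nv z : Fin k → ℕ)
    (hn : ∀ i, 1 ≤ nv i) (hz : ∀ i j : Fin k, i < j → z j < z i) :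
    GG h (LL nv z) = ((∏ i, ((nv i).factorial : ℚ))⁻¹) •
            (List.ofFn fun i : Fin k => h (z i) ^ nv i).prod := by
  have hi := inj_of z hz
  rw [GG, LL_toFinset nv z hn, Finset.prod_image (fun a _ b _ e => hi e)]
  simp_rw [LL_count_self nv z hi]
  congr 1
  simp [LL, List.map_flatten, List.prod_flatten, List.map_ofFn, Function.comp_def]

theorem GG_ofFn {R : Type*} [Ring R] [Algebra ℚ R] (h : ℕ → R) {n : ℕ} (z : Fin n → ℕ)
    (hz : ∀ i j : Fin n, i ≤ j → z j ≤ z i) :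
    GG h (List.ofFn z) = Upsilon z • (List.ofFn fun i : Fin n => h (z i)).prod := by
  rw [GG, Upsilon, if_pos hz]
  have h1 : (List.ofFn z).toFinset = Finset.univ.image z := by
    ext v; simp [List.mem_ofFn]
  have h2 : ∀ v, (List.ofFn z).count v = (Finset.univ.filter fun i => z i = v).card := by
    intro v
    rw [← Multiset.coe_count, ← Fin.univ_val_map, Multiset.count_map]
    simp only [Finset.card, Finset.filter_val, eq_comm]
  rw [h1, List.map_ofFn]
  simp_rw [h2]
  push_cast
  rfl

theorem LL_inj {k k' : ℕ} (nv z : Fin k → ℕ) (nv' z' : Fin k' → ℕ)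
    (hn : ∀ i, 1 ≤ nv i) (hz : ∀ i j : Fin k, i < j → z j < z i)
    (hn' : ∀ i, 1 ≤ nv' i) (hz' : ∀ i j : Fin k', i < j → z' j < z' i)
    (e : LL nv z = LL nv' z') :
    (⟨k, nv, z⟩ : (Σ k : ℕ, Σ _ : Fin k → ℕ, Fin k → ℕ)) = ⟨k', nv', z'⟩ := by
  have e1 := congrArg List.toFinset e
  rw [LL_toFinset nv z hn, LL_toFinset nv' z' hn'] at e1
  have e2 := congrArg Finset.card e1
  rw [Finset.card_image_of_injective _ (inj_of z hz),
    Finset.card_image_of_injective _ (inj_of z' hz')] at e2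
  simp only [Finset.card_univ, Fintype.card_fin] at e2
  subst e2
  have e3 : Set.range z = Set.range z' := by
    have := congrArg (fun s : Finset ℕ => (s : Set ℕ)) e1
    simpa using this
  have e4 : z = z' := by
    have a1 : StrictAnti z := fun i j => hz i j
    have a2 : StrictAnti z' := fun i j => hz' i j
    have := (StrictMono.range_inj (f := fun i => OrderDual.toDual (z i))
      (g := fun i => OrderDual.toDual (z' i)) (fun i j hij => a1 hij) (fun i j hij => a2 hij)).1 e3
    exact this
  subst e4
  have e5 : nv = nv' := by
    funext i
    rw [← LL_count_self nv z (inj_of z hz) i, e, LL_count_self nv' z (inj_of z hz) i]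
  subst e5
  rfl

theorem LL_surj (l : List ℕ) (hl : l.Pairwise (· ≥ ·)) :
    ∃ (nv z : Fin l.toFinset.card → ℕ), (∀ i j, i < j → z j < z i) ∧
      (∀ i, z i ∈ l) ∧ (∀ i, nv i = l.count (z i)) ∧ LL nv z = l := by
  let z : Fin l.toFinset.card → ℕ := fun i => l.toFinset.orderEmbOfFin rfl i.rev
  have hz : ∀ i j, i < j → z j < z i := by
    intro i j hij
    simpa [z] using hij
  have hm : ∀ i, z i ∈ l := fun i =>
    List.mem_toFinset.1 (Finset.orderEmbOfFin_mem l.toFinset rfl i.rev)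
  refine ⟨fun i => l.count (z i), z, hz, hm, fun _ => rfl, ?_⟩
  refine List.Perm.eq_of_pairwise (le := (· ≥ ·)) (fun a b _ _ h1 h2 => le_antisymm h2 h1) (LL_sorted _ _ hz) hl ?_
  rw [List.perm_iff_count]
  intro v
  by_cases hv : v ∈ l
  · have : v ∈ Set.range (l.toFinset.orderEmbOfFin rfl) := by
      rw [Finset.range_orderEmbOfFin]; simpa using hv
    obtain ⟨i, hi⟩ := this
    have : z i.rev = v := by simp [z, hi]
    rw [← this, LL_count_self _ z (inj_of z hz)]
  · rw [List.count_eq_zero_of_not_mem hv, LL_count]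
    apply Finset.sum_eq_zero
    intro i _
    rw [if_neg]
    rintro rfl
    exact hv (hm i)

/-- In a `ℚ`-algebra `R`, for elements `h 1, …, h m` and any `n ≥ 1`, the sum over
`k`, over compositions `(n₁,…,n_k)` of `n` into positive parts, and over strictly
decreasing tuples `m ≥ z₁ > ⋯ > z_k ≥ 1` of `(1/(n₁!⋯n_k!)) • h_{z₁}^{n₁} ⋯ h_{z_k}^{n_k}`
equals `∑_{z ∈ {1,…,m}ⁿ} Υ(z) • h_{z₁} ⋯ h_{z_n}` (ordered products). -/
theorem composition_sum_eq_upsilon_sum {R : Type*} [Ring R] [Algebra ℚ R]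
    (m n : ℕ) (hm : 1 ≤ m) (hn : 1 ≤ n) (h : ℕ → R) :
    (∑ k ∈ Finset.Icc 1 n,
      ∑ nv ∈ (Fintype.piFinset fun _ : Fin k => Finset.Icc 1 n).filter
          (fun nv => ∑ i, nv i = n),
        ∑ z ∈ (Fintype.piFinset fun _ : Fin k => Finset.Icc 1 m).filter
            (fun z => ∀ i j : Fin k, i < j → z j < z i),
          ((∏ i, ((nv i).factorial : ℚ))⁻¹) •
            (List.ofFn fun i : Fin k => h (z i) ^ nv i).prod) =
      ∑ z ∈ Fintype.piFinset fun _ : Fin n => Finset.Icc 1 m,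
        Upsilon z • (List.ofFn fun i : Fin n => h (z i)).prod := by
  classical
  set A := (Fintype.piFinset fun _ : Fin n => Finset.Icc 1 m).filter
    (fun z => ∀ i j : Fin n, i ≤ j → z j ≤ z i) with hA
  have hR : ∑ z ∈ Fintype.piFinset fun _ : Fin n => Finset.Icc 1 m,
        Upsilon z • (List.ofFn fun i : Fin n => h (z i)).prod
      = ∑ l ∈ A.image List.ofFn, GG h l := by
    rw [Finset.sum_image (fun a _ b _ e => List.ofFn_injective e), hA, Finset.sum_filter]
    apply Finset.sum_congr rfl
    intro z _
    split_ifs with hz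
    · rw [GG_ofFn h z hz]
    · rw [Upsilon, if_neg hz, zero_smul]
  have hmem : ∀ l : List ℕ, l ∈ A.image List.ofFn ↔
      l.length = n ∧ l.Pairwise (· ≥ ·) ∧ ∀ v ∈ l, v ∈ Finset.Icc 1 m := by
    intro l
    rw [Finset.mem_image]
    constructor
    · rintro ⟨z, hz, rfl⟩
      rw [hA, Finset.mem_filter, Fintype.mem_piFinset] at hz
      refine ⟨by simp, ?_, ?_⟩
      · rw [List.pairwise_ofFn]
        exact fun i j hij => hz.2 i j hij.le
      · intro v hv
        obtain ⟨i, rfl⟩ := (List.mem_ofFn' _ _).1 hv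
        exact hz.1 i
    · rintro ⟨rfl, h2, h3⟩
      refine ⟨l.get, ?_, List.ofFn_get l⟩
      rw [hA, Finset.mem_filter, Fintype.mem_piFinset]
      refine ⟨fun i => h3 _ (List.get_mem l i), fun i j hij => ?_⟩
      rcases hij.eq_or_lt with rfl | hij
      · exact le_rfl
      · exact List.pairwise_iff_get.1 h2 i j hij
  rw [hR]
  have key : ∀ k : ℕ, ∀ nv z : Fin k → ℕ,
      nv ∈ (Fintype.piFinset fun _ : Fin k => Finset.Icc 1 n).filter (fun nv => ∑ i, nv i = n) →
      z ∈ (Fintype.piFinset fun _ : Fin k => Finset.Icc 1 m).filter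
            (fun z => ∀ i j : Fin k, i < j → z j < z i) →
      (∀ i, 1 ≤ nv i) ∧ (∑ i, nv i = n) ∧ (∀ i, z i ∈ Finset.Icc 1 m) ∧
        (∀ i j : Fin k, i < j → z j < z i) := by
    intro k nv z h1 h2
    rw [Finset.mem_filter, Fintype.mem_piFinset] at h1 h2
    exact ⟨fun i => (Finset.mem_Icc.1 (h1.1 i)).1, h1.2, h2.1, h2.2⟩
  have hL : ∀ k : ℕ, (∑ nv ∈ (Fintype.piFinset fun _ : Fin k => Finset.Icc 1 n).filter
          (fun nv => ∑ i, nv i = n),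
        ∑ z ∈ (Fintype.piFinset fun _ : Fin k => Finset.Icc 1 m).filter
            (fun z => ∀ i j : Fin k, i < j → z j < z i),
          ((∏ i, ((nv i).factorial : ℚ))⁻¹) •
            (List.ofFn fun i : Fin k => h (z i) ^ nv i).prod) =
      ∑ x ∈ ((Fintype.piFinset fun _ : Fin k => Finset.Icc 1 n).filter
          (fun nv => ∑ i, nv i = n)).sigma (fun _ =>
        (Fintype.piFinset fun _ : Fin k => Finset.Icc 1 m).filter
            (fun z => ∀ i j : Fin k, i < j → z j < z i)), GG h (LL x.1 x.2) := by
    intro k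
    rw [Finset.sum_sigma]
    refine Finset.sum_congr rfl fun nv h1 => Finset.sum_congr rfl fun z h2 => ?_
    obtain ⟨a, b, c, d⟩ := key k nv z h1 h2
    rw [GG_LL h nv z a d]
  rw [Finset.sum_congr rfl fun k _ => hL k, Finset.sum_sigma']
  refine Finset.sum_bij (fun x _ => LL x.2.1 x.2.2) ?_ ?_ ?_ ?_
  · rintro ⟨k, nv, z⟩ hx
    simp only [Finset.mem_sigma] at hx
    obtain ⟨a, b, c, d⟩ := key k nv z hx.2.1 hx.2.2
    rw [hmem]
    refine ⟨by rw [LL_length, b], LL_sorted nv z d, fun v hv => ?_⟩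
    rw [← List.mem_toFinset, LL_toFinset nv z a, Finset.mem_image] at hv
    obtain ⟨i, _, rfl⟩ := hv
    exact c i
  · rintro ⟨k, nv, z⟩ hx ⟨k', nv', z'⟩ hx' e
    simp only [Finset.mem_sigma] at hx hx'
    obtain ⟨a, b, c, d⟩ := key k nv z hx.2.1 hx.2.2
    obtain ⟨a', b', c', d'⟩ := key k' nv' z' hx'.2.1 hx'.2.2
    exact LL_inj nv z nv' z' a d a' d' e
  · intro l hl
    rw [hmem] at hl
    obtain ⟨h1, h2, h3⟩ := hl
    obtain ⟨nv, z, p, q, r, s⟩ := LL_surj l h2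
    refine ⟨⟨_, nv, z⟩, ?_, s⟩
    simp only [Finset.mem_sigma, Finset.mem_filter, Fintype.mem_piFinset, Finset.mem_Icc]
    refine ⟨⟨?_, ?_⟩, ⟨fun i => ⟨?_, ?_⟩, ?_⟩, fun i => Finset.mem_Icc.1 (h3 _ (q i)), p⟩
    · rw [Nat.one_le_iff_ne_zero, Finset.card_ne_zero, List.toFinset_nonempty_iff]
      rintro rfl
      simp at h1
      omega
    · rw [← h1]; exact l.toFinset_card_le
    · rw [r i]; exact List.count_pos_iff.2 (q i)
    · rw [r i, ← h1]; exact List.count_le_length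
    · rw [← LL_length nv z, s, h1]
  · intro x _
    rfl
end
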